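/- arXiv:1804.03484 — 2 statements merged into one kernel-verified Lean document; each statement's English description precedes it below -/
import Mathlib

section
/- In ℤ[X], the polynomial D = (1−X^4)·(1−X^8)·(1−X^{12})·(1−X^{16})^2·(1−X^{20})·(1−X^{24})·(1−X^{28}) divides N = (1−X^4)·(1−X^{16})·(1−X^{24})·(1−X^{28})·(1−X^{36})·(1−X^{40})·(1−X^{48})·(1−X^{60}); moreover the quotient Q = N/D has degree 128, constant coefficient 1, and all of its coefficients are nonnegative. -/
open Polynomial

/-!
The invariant degrees of `SO(16)` can be matched with those of `E₈` so that each divides its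
partner: besides the common ones, `4 ∣ 20`, `6 ∣ 18`, `8 ∣ 24` and `10 ∣ 30`. If `d ∣ e`, the
quotient of `1 - X ^ e` by `1 - X ^ d` is a geometric sum of powers of `X`, and products of such
sums have natural number coefficients. The degree and the constant coefficient of the quotient are
read off by comparing those of numerator and denominator.
-/

/-- The product of the polynomials `1 - X ^ d`, with `d` running over a multiset of exponents. When
these are the degrees of the generators of `H^*(BG; ℚ)` for a compact connected Lie group `G`, it is
the reciprocal of the Poincaré series of `BG`. -/
noncomputable def prodOneSubXPow (R : Type*) [CommRing R] (s : Multiset ℕ) : R[X] :=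
  (s.map fun d => 1 - X ^ d).prod

section CommRing

variable {R : Type*} [CommRing R]

@[simp]
theorem prodOneSubXPow_zero : prodOneSubXPow R 0 = 1 := by
  simp [prodOneSubXPow]

@[simp]
theorem prodOneSubXPow_cons (d : ℕ) (s : Multiset ℕ) :
    prodOneSubXPow R (d ::ₘ s) = (1 - X ^ d) * prodOneSubXPow R s := by
  simp [prodOneSubXPow]

theorem coeff_zero_prodOneSubXPow {s : Multiset ℕ} (hs : 0 ∉ s) :
    (prodOneSubXPow R s).coeff 0 = 1 := by
  induction s using Multiset.induction_on with
  | empty => simp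
  | cons d s ih =>
    obtain ⟨hd, hs⟩ : 0 ≠ d ∧ 0 ∉ s := by simpa using hs
    simp [mul_coeff_zero, coeff_X_pow, hd, ih hs]

theorem prodOneSubXPow_ne_zero [Nontrivial R] {s : Multiset ℕ} (hs : 0 ∉ s) :
    prodOneSubXPow R s ≠ 0 := fun h => by
  simpa [h] using coeff_zero_prodOneSubXPow (R := R) hs

theorem natDegree_one_sub_X_pow [Nontrivial R] (d : ℕ) : (1 - X ^ d : R[X]).natDegree = d := by
  rw [← neg_sub, natDegree_neg, ← C_1, natDegree_X_pow_sub_C]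

theorem natDegree_prodOneSubXPow [IsDomain R] {s : Multiset ℕ} (hs : 0 ∉ s) :
    (prodOneSubXPow R s).natDegree = s.sum := by
  have h_zero : (0 : R[X]) ∉ s.map fun d => 1 - X ^ d := fun h =>
    prodOneSubXPow_ne_zero hs (Multiset.prod_eq_zero h)
  simp [prodOneSubXPow, natDegree_multiset_prod _ h_zero, natDegree_one_sub_X_pow]

theorem exists_mem_lifts_one_sub_X_pow_eq_mul {d e : ℕ} (h : d ∣ e) :
    ∃ q ∈ lifts (Nat.castRingHom R), 1 - X ^ e = (1 - X ^ d) * q := by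
  obtain ⟨m, rfl⟩ := h
  refine ⟨∑ i ∈ Finset.range m, (X ^ d) ^ i, ?_, ?_⟩
  · exact sum_mem fun i _ => pow_mem (X_pow_mem_lifts _ d) i
  · rw [mul_neg_geom_sum, pow_mul]

theorem exists_mem_lifts_prodOneSubXPow_eq_mul {s t : Multiset ℕ}
    (h : Multiset.Rel (· ∣ ·) t s) :
    ∃ q ∈ lifts (Nat.castRingHom R), prodOneSubXPow R s = prodOneSubXPow R t * q := by
  induction h with
  | zero => exact ⟨1, one_mem _, by simp⟩
  | @cons d e t s hde _ ih =>
    obtain ⟨p, hp, hp_eq⟩ := exists_mem_lifts_one_sub_X_pow_eq_mul (R := R) hde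
    obtain ⟨q, hq, hq_eq⟩ := ih
    refine ⟨p * q, mul_mem hp hq, ?_⟩
    rw [prodOneSubXPow_cons, prodOneSubXPow_cons, hp_eq, hq_eq, mul_mul_mul_comm]

end CommRing

theorem coeff_nonneg_of_mem_lifts_natCast {R : Type*} [Semiring R] [PartialOrder R]
    [IsOrderedRing R] {p : R[X]} (hp : p ∈ lifts (Nat.castRingHom R)) (n : ℕ) :
    0 ≤ p.coeff n := by
  obtain ⟨m, hm⟩ := (lifts_iff_coeff_lifts p).1 hp n
  exact hm ▸ m.cast_nonneg

theorem stmt7_general {R : Type*} [CommRing R] [IsDomain R] [PartialOrder R] [IsOrderedRing R]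
    {s t : Multiset ℕ} (hs : 0 ∉ s) (hts : Multiset.Rel (· ∣ ·) t s) :
    prodOneSubXPow R t ∣ prodOneSubXPow R s ∧
      ∀ Q : R[X], prodOneSubXPow R s = prodOneSubXPow R t * Q →
        Q.natDegree + t.sum = s.sum ∧ Q.coeff 0 = 1 ∧ ∀ n : ℕ, 0 ≤ Q.coeff n := by
  have ht : 0 ∉ t := fun h => by
    obtain ⟨e, he, h_dvd⟩ := Multiset.exists_mem_of_rel_of_mem hts h
    exact hs (zero_dvd_iff.1 h_dvd ▸ he)
  obtain ⟨q, hq, hq_eq⟩ := exists_mem_lifts_prodOneSubXPow_eq_mul (R := R) hts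
  refine ⟨⟨q, hq_eq⟩, fun Q hQ => ?_⟩
  have h_ne : prodOneSubXPow R t ≠ 0 := prodOneSubXPow_ne_zero ht
  obtain rfl : q = Q := mul_left_cancel₀ h_ne (hq_eq.symm.trans hQ)
  have hq_ne : q ≠ 0 := right_ne_zero_of_mul (hQ ▸ prodOneSubXPow_ne_zero hs)
  refine ⟨?_, ?_, coeff_nonneg_of_mem_lifts_natCast hq⟩
  · rw [← natDegree_prodOneSubXPow (R := R) ht, add_comm, ← natDegree_mul h_ne hq_ne, ← hQ,
      natDegree_prodOneSubXPow hs]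
  · simpa [mul_coeff_zero, coeff_zero_prodOneSubXPow, hs, ht] using
      (congrArg (coeff · 0) hQ).symm

/-- The degrees of the generators of `H^*(BE₈; ℚ)`: twice the invariant degrees
`2, 8, 12, 14, 18, 20, 24, 30` of `E₈`. -/
def e8GeneratorDegrees : Multiset ℕ := {4, 16, 24, 28, 36, 40, 48, 60}

/-- The degrees of the generators of `H^*(BSO(16); ℚ)`: twice the invariant degrees
`2, 4, 6, 8, 8, 10, 12, 14` of `SO(16)`, the second `8` being that of the Pfaffian. -/
def so16GeneratorDegrees : Multiset ℕ := {4, 8, 12, 16, 16, 20, 24, 28}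

theorem rel_dvd_so16GeneratorDegrees_e8GeneratorDegrees :
    Multiset.Rel (· ∣ ·) so16GeneratorDegrees e8GeneratorDegrees := by
  have h_matched : e8GeneratorDegrees = {4, 40, 36, 16, 48, 60, 24, 28} := by decide
  rw [h_matched, so16GeneratorDegrees]
  refine .cons ?_ (.cons ?_ (.cons ?_ (.cons ?_ (.cons ?_ (.cons ?_ (.cons ?_ (.cons ?_ .zero)))))))
    <;> norm_num

theorem stmt7 :
    (((1 - X ^ 4) * (1 - X ^ 8) * (1 - X ^ 12) * (1 - X ^ 16) ^ 2 * (1 - X ^ 20) *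
          (1 - X ^ 24) * (1 - X ^ 28) : ℤ[X]) ∣
        (1 - X ^ 4) * (1 - X ^ 16) * (1 - X ^ 24) * (1 - X ^ 28) * (1 - X ^ 36) *
          (1 - X ^ 40) * (1 - X ^ 48) * (1 - X ^ 60)) ∧
    ∀ Q : ℤ[X],
      ((1 - X ^ 4) * (1 - X ^ 16) * (1 - X ^ 24) * (1 - X ^ 28) * (1 - X ^ 36) *
            (1 - X ^ 40) * (1 - X ^ 48) * (1 - X ^ 60) : ℤ[X]) =
          (1 - X ^ 4) * (1 - X ^ 8) * (1 - X ^ 12) * (1 - X ^ 16) ^ 2 * (1 - X ^ 20) *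
            (1 - X ^ 24) * (1 - X ^ 28) * Q →
        Q.natDegree = 128 ∧ Q.coeff 0 = 1 ∧ ∀ n : ℕ, 0 ≤ Q.coeff n := by
  simpa [prodOneSubXPow, e8GeneratorDegrees, so16GeneratorDegrees, sq, mul_assoc] using
    stmt7_general (R := ℤ) (by decide) rel_dvd_so16GeneratorDegrees_e8GeneratorDegrees
end

section
/- Let Q_{E8} ∈ ℤ[X] be the quotient of (1−X^4)·(1−X^{16})·(1−X^{24})·(1−X^{28})·(1−X^{36})·(1−X^{40})·(1−X^{48})·(1−X^{60}) by (1−X^4)·(1−X^8)·(1−X^{12})·(1−X^{16})^2·(1−X^{20})·(1−X^{24})·(1−X^{28}). Then for every natural number n that is not divisible by 4, the coefficient of X^n in Q_{E8} is 0. -/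
open Polynomial

/-!
The polynomials in `X ^ k` form the range of `expand R k`, and `contract k`, which keeps the
coefficients at multiples of `k`, satisfies `contract k (f * expand R k b) = contract k f * b`. If
`g * f` and `g` are polynomials in `X ^ k`, then replacing `f` by its part supported on multiples
of `k` does not change `g * f`; so once `g` can be cancelled, `f` equals that part. A product of
factors `1 - X ^ d` with all `d` nonzero multiples of `k` is such a `g`. For E8, `k = 4` and the
exponents are twice the invariant degrees of E8 (numerator) and of SO(16) (denominator).
-/

section Semiring

variable {R : Type*} [CommSemiring R] {k : ℕ}

theorem coeff_eq_zero_of_mem_range_expand (hk : k ≠ 0) {f : R[X]} (hf : f ∈ (expand R k).range)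
    {n : ℕ} (hn : ¬ k ∣ n) : f.coeff n = 0 := by
  obtain ⟨g, rfl⟩ := hf
  exact (coeff_expand hk.pos g n).trans (if_neg hn)

theorem mem_range_expand_of_mul_mem (hk : k ≠ 0) {f g : R[X]} (hg : g ∈ (expand R k).range)
    (hg_reg : IsLeftRegular g) (hgf : g * f ∈ (expand R k).range) : f ∈ (expand R k).range := by
  obtain ⟨b, rfl⟩ := hg
  obtain ⟨a, ha : expand R k a = expand R k b * f⟩ := hgf
  have ha_contract : a = b * contract k f := by
    rw [← contract_expand k (f := a) hk, ha, mul_comm, contract_mul_expand hk, mul_comm]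
  refine ⟨contract k f, hg_reg ?_⟩
  calc expand R k b * expand R k (contract k f) = expand R k a := by rw [ha_contract, map_mul]
    _ = expand R k b * f := ha

end Semiring

section Ring

open scoped nonZeroDivisors

variable {R : Type*} [CommRing R]

theorem one_sub_X_pow_mem_range_expand {k d : ℕ} (hd : k ∣ d) :
    (1 - X ^ d : R[X]) ∈ (expand R k).range := by
  obtain ⟨m, rfl⟩ := hd
  exact ⟨1 - X ^ m, by simp [pow_mul]⟩

theorem prod_one_sub_X_pow_mem_range_expand {k : ℕ} {s : Multiset ℕ} (hs : ∀ d ∈ s, k ∣ d) :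
    (s.map fun d ↦ (1 - X ^ d : R[X])).prod ∈ (expand R k).range :=
  multiset_prod_mem _ <| Multiset.forall_mem_map_iff.2 fun d hd ↦
    one_sub_X_pow_mem_range_expand (hs d hd)

theorem one_sub_X_pow_mem_nonZeroDivisors {d : ℕ} (hd : d ≠ 0) : (1 - X ^ d : R[X]) ∈ R[X]⁰ :=
  mem_nonzeroDivisors_of_coeff_mem 0 (by simp [hd.symm, one_mem])

theorem prod_one_sub_X_pow_mem_nonZeroDivisors {s : Multiset ℕ} (hs : 0 ∉ s) :
    (s.map fun d ↦ (1 - X ^ d : R[X])).prod ∈ R[X]⁰ :=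
  multiset_prod_mem _ <| Multiset.forall_mem_map_iff.2 fun _ hd ↦
    one_sub_X_pow_mem_nonZeroDivisors (ne_of_mem_of_not_mem hd hs)

theorem stmt8_general {k : ℕ} (hk : k ≠ 0) {s t : Multiset ℕ} (hs : ∀ d ∈ s, k ∣ d)
    (ht : ∀ d ∈ t, k ∣ d) (ht_zero : 0 ∉ t) {Q : R[X]}
    (hQ : (s.map fun d ↦ (1 - X ^ d : R[X])).prod = (t.map fun d ↦ (1 - X ^ d)).prod * Q) :
    ∀ n : ℕ, ¬ k ∣ n → Q.coeff n = 0 := by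
  have ht_reg : IsLeftRegular (t.map fun d ↦ (1 - X ^ d : R[X])).prod :=
    (isRegular_iff_mem_nonZeroDivisors.2 (prod_one_sub_X_pow_mem_nonZeroDivisors ht_zero)).left
  have hQ_mem : Q ∈ (expand R k).range :=
    mem_range_expand_of_mul_mem hk (prod_one_sub_X_pow_mem_range_expand ht) ht_reg
      (hQ ▸ prod_one_sub_X_pow_mem_range_expand hs)
  exact fun _ hn ↦ coeff_eq_zero_of_mem_range_expand hk hQ_mem hn

end Ring

theorem stmt8 (Q : ℤ[X])
    (hQ : ((1 - X ^ 4) * (1 - X ^ 16) * (1 - X ^ 24) * (1 - X ^ 28) * (1 - X ^ 36) *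
        (1 - X ^ 40) * (1 - X ^ 48) * (1 - X ^ 60) : ℤ[X]) =
      (1 - X ^ 4) * (1 - X ^ 8) * (1 - X ^ 12) * (1 - X ^ 16) ^ 2 * (1 - X ^ 20) *
        (1 - X ^ 24) * (1 - X ^ 28) * Q) :
    ∀ n : ℕ, ¬ (4 ∣ n) → Q.coeff n = 0 :=
  stmt8_general (s := {4, 16, 24, 28, 36, 40, 48, 60}) (t := {4, 8, 12, 16, 16, 20, 24, 28})
    four_ne_zero (by decide) (by decide) (by decide) (by
      simpa only [Multiset.insert_eq_cons, Multiset.map_cons, Multiset.map_singleton,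
        Multiset.prod_cons, Multiset.prod_singleton, pow_two, mul_assoc] using hQ)
end
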